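/- Let G be a connected locally finite graph, 𝒜 a shift-invariant event of the simple random walk on G, and for r ∈ (0,1/2] set A_r := {v ∈ V(G) : P_v(𝒜) > 1 − r}. Let ε > 0 and κ ∈ (0,1] with ε/κ ∈ (0,1/2], let v ∈ A_ε, and let W ⊆ V(G) be a set that the simple random walk started at v visits with probability at least κ. Then there exists a path in G from v to W all of whose vertices lie in A_{ε/κ}. The analogous statement holds with A replaced by Z, where Z_r := {v ∈ V(G) : P_v(𝒜) < r}. -/

import Mathlib

/-!
Write `h u = P u A`, which satisfies the Markov property at the cylinder events: by shift-invariance,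
`P v (C ∩ A) = P v C * h (x n)` when `C` prescribes the first `n + 1` positions `x 0, …, x n` of the
walk (`measure_cyl_inter`). Decomposing according to the trajectory up to the first visit to
`S = {u | c ≤ h u}` yields the maximal inequality `c * P v (the walk hits S) ≤ h v`
(`mul_hit_le`).

For the `Z` version take `c = ε / κ`. Almost every trajectory from `v` is a walk in `G`, so if no
path from `v` to `W` stays in `{h < ε / κ}`, then almost every trajectory visiting `W` visits `S`.
Hence `κ ≤ P v (the walk hits S)`, and the maximal inequality gives `ε ≤ h v`, a contradiction.
The `A` version is the `Z` version for the complementary event, which is also shift-invariant.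
-/


/-!
STATEMENT 11: Let G be a connected locally finite graph, 𝒜 a shift-invariant
event of the simple random walk, A_r := {v : P_v(𝒜) > 1 − r},
Z_r := {v : P_v(𝒜) < r}.  Let ε > 0 and κ ∈ (0,1] with ε/κ ∈ (0,1/2], let
v ∈ A_ε, and let W be a set that the walk from v visits with probability ≥ κ.
Then there is a path in G from v to W all of whose vertices lie in A_{ε/κ};
analogously with A replaced by Z.
-/

namespace Paper

open MeasureTheory Filter
open scoped Classical

variable {V : Type*}

/-- `h` is harmonic: at each vertex, `deg v · h v` equals the sum of `h` over
the neighbours of `v`. -/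
def Harmonic (G : SimpleGraph V) (h : V → ℝ) : Prop :=
  ∀ v, ((G.neighborSet v).ncard : ℝ) * h v = ∑ᶠ w ∈ G.neighborSet v, h w

/-- One-step transition probability of the simple random walk on `G`. -/
noncomputable def stepProb (G : SimpleGraph V) (u w : V) : ENNReal :=
  if G.Adj u w then ((G.neighborSet u).ncard : ENNReal)⁻¹ else 0

/-- `P` is the family of laws of the simple random walk on `G`: `P v` is a
probability measure on the trajectory space `ℕ → V` (with the product
σ-algebra) whose finite-dimensional cylinder probabilities are the products of
the one-step transition probabilities, started at `v`. -/
def IsSRWLaw [MeasurableSpace V] (G : SimpleGraph V)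
    (P : V → Measure (ℕ → V)) : Prop :=
  (∀ v, IsProbabilityMeasure (P v)) ∧
  ∀ (v : V) (n : ℕ) (x : ℕ → V),
    P v {ω | ∀ i ≤ n, ω i = x i} =
      if x 0 = v then ∏ i ∈ Finset.range n, stepProb G (x i) (x (i + 1)) else 0

/-- `h` is a sharp harmonic function: harmonic with values in `[0,1]`, and from
every vertex, almost surely `h (X n)` converges to `0` or to `1`. -/
def Sharp [MeasurableSpace V] (G : SimpleGraph V) (P : V → Measure (ℕ → V))
    (h : V → ℝ) : Prop :=
  Harmonic G h ∧ (∀ v, h v ∈ Set.Icc (0 : ℝ) 1) ∧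
  ∀ v, P v {ω | Tendsto (fun n => h (ω n)) atTop (nhds 0) ∨
               Tendsto (fun n => h (ω n)) atTop (nhds 1)} = 1

/-- A shift-invariant event of the trajectory space. -/
def ShiftInvariant [MeasurableSpace V] (A : Set (ℕ → V)) : Prop :=
  MeasurableSet A ∧ A = (fun ω : ℕ → V => fun n => ω (n + 1)) ⁻¹' A

/-! ### Cylinder events -/

/-- The trajectories that agree with `x` at the times `0, …, n`. -/
def cyl (n : ℕ) (x : ℕ → V) : Set (ℕ → V) := {ω | ∀ i ≤ n, ω i = x i}

/-- The trajectory that follows `y` up to time `n` and stays at `y n` afterwards. The cylinders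
`cyl n (frozenAt n y)` are a countable family when `V` is countable. -/
def frozenAt (n : ℕ) (y : Fin (n + 1) → V) : ℕ → V :=
  fun k => y ⟨min k n, by omega⟩

lemma mem_cyl_frozenAt (n : ℕ) (ω : ℕ → V) : ω ∈ cyl n (frozenAt n fun i => ω i) := by
  intro i hi
  simp [frozenAt, hi]

lemma frozenAt_apply {n : ℕ} {ω : ℕ → V} {y : Fin (n + 1) → V} (h : ω ∈ cyl n (frozenAt n y))
    (i : Fin (n + 1)) : ω i = y i := by
  have := h i (by omega)
  rw [this, frozenAt]
  congr 1
  ext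
  simp
  omega

lemma measurableSet_cyl [MeasurableSpace V] [MeasurableSingletonClass V]
    (n : ℕ) (x : ℕ → V) : MeasurableSet (cyl n x) := by
  have : cyl n x = ⋂ i ∈ Set.Iic n, (fun ω : ℕ → V => ω i) ⁻¹' {x i} := by
    ext ω; simp [cyl]
  rw [this]
  exact MeasurableSet.biInter (Set.to_countable _)
    fun i _ => measurable_pi_apply i (measurableSet_singleton _)

/-- The cylinders together with `∅`, a π-system. -/
def cylinders (V : Type*) : Set (Set (ℕ → V)) := {s | s = ∅ ∨ ∃ n x, s = cyl n x}

lemma isPiSystem_cylinders : IsPiSystem (cylinders V) := by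
  rintro s (rfl | ⟨n, x, rfl⟩) t (rfl | ⟨k, y, rfl⟩) ⟨ω, h1, h2⟩
  · simp at h1
  · simp at h1
  · simp at h2
  · refine Or.inr ⟨max n k, ω, ?_⟩
    ext η
    constructor
    · rintro ⟨g1, g2⟩ i hi
      rcases le_max_iff.1 hi with hi | hi
      · rw [g1 i hi, h1 i hi]
      · rw [g2 i hi, h2 i hi]
    · intro g
      exact ⟨fun i hi => (g i (hi.trans (le_max_left _ _))).trans (h1 i hi),
        fun i hi => (g i (hi.trans (le_max_right _ _))).trans (h2 i hi)⟩

lemma generateFrom_cylinders [MeasurableSpace V] [MeasurableSingletonClass V] [Countable V] :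
    (MeasurableSpace.pi : MeasurableSpace (ℕ → V)) =
      MeasurableSpace.generateFrom (cylinders V) := by
  apply le_antisymm
  · refine iSup_le fun i => ?_
    rintro _ ⟨s, -, rfl⟩
    have : (fun ω : ℕ → V => ω i) ⁻¹' s =
        ⋃ y : {y : Fin (i + 1) → V // y (Fin.last i) ∈ s}, cyl i (frozenAt i y.1) := by
      ext ω
      simp only [Set.mem_preimage, Set.mem_iUnion]
      constructor
      · intro h
        exact ⟨⟨fun j => ω j, by simpa using h⟩, mem_cyl_frozenAt i ω⟩
      · rintro ⟨⟨y, hy⟩, h⟩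
        have := frozenAt_apply h (Fin.last i)
        simp only [Fin.val_last] at this
        rwa [this]
    rw [this]
    exact @MeasurableSet.iUnion _ _ (_) _ _ fun y =>
      MeasurableSpace.measurableSet_generateFrom (Or.inr ⟨_, _, rfl⟩)
  · refine MeasurableSpace.generateFrom_le ?_
    rintro s (rfl | ⟨n, x, rfl⟩)
    · exact MeasurableSet.empty
    · exact measurableSet_cyl n x

/-! ### The Markov property -/

/-- The shift by `n`. -/
def shift (n : ℕ) (ω : ℕ → V) : ℕ → V := fun k => ω (n + k)

lemma measurable_shift [MeasurableSpace V] (n : ℕ) : Measurable (shift n : (ℕ → V) → ℕ → V) :=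
  measurable_pi_lambda _ fun k => measurable_pi_apply (n + k)

lemma ShiftInvariant.mem_shift_iff [MeasurableSpace V] {A : Set (ℕ → V)} (hA : ShiftInvariant A)
    (n : ℕ) (ω : ℕ → V) : shift n ω ∈ A ↔ ω ∈ A := by
  induction n generalizing ω with
  | zero =>
    have : shift 0 ω = ω := by funext k; simp [shift]
    rw [this]
  | succ n ih =>
    rw [← ih ω]
    conv_rhs => rw [hA.2]
    simp only [Set.mem_preimage, shift]
    have : shift (n + 1) ω = fun k => ω (n + (k + 1)) := by
      funext k; simp only [shift]; congr 1; omega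
    rw [this]

lemma cyl_inter_shift_cyl (n k : ℕ) (x y : ℕ → V) (hxy : y 0 = x n) :
    cyl n x ∩ shift n ⁻¹' cyl k y = cyl (n + k) (fun i => if i ≤ n then x i else y (i - n)) := by
  ext ω
  constructor
  · rintro ⟨h1, h2⟩ i hi
    dsimp only
    split_ifs with h
    · exact h1 i h
    · have := h2 (i - n) (by omega)
      simp only [shift] at this
      rwa [show n + (i - n) = i by omega] at this
  · intro h
    constructor
    · intro i hi
      have := h i (by omega)
      simpa [hi] using this
    · intro i hi
      have := h (n + i) (by omega)
      rcases Nat.eq_zero_or_pos i with rfl | hpos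
      · simpa [shift, hxy] using this
      · simpa [shift, show ¬ i = 0 by omega] using this

/-- The Markov property of the walk at time `n`, on the event that its first positions are
`x 0, …, x n`. -/
lemma measure_cyl_inter_shift [MeasurableSpace V] [MeasurableSingletonClass V] [Countable V]
    {G : SimpleGraph V} {P : V → Measure (ℕ → V)} (hP : IsSRWLaw G P) (v : V) (n : ℕ) (x : ℕ → V)
    {E : Set (ℕ → V)} (hE : MeasurableSet E) :
    P v (cyl n x ∩ shift n ⁻¹' E) = P v (cyl n x) * P (x n) E := by
  have := hP.1
  have key : ((P v).restrict (cyl n x)).map (shift n) = P v (cyl n x) • P (x n) := by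
    refine ext_of_generate_finite (cylinders V) generateFrom_cylinders isPiSystem_cylinders ?_ ?_
    · rintro s (rfl | ⟨k, y, rfl⟩)
      · simp
      rw [Measure.map_apply (measurable_shift n) (measurableSet_cyl k y),
        Measure.restrict_apply (measurable_shift n (measurableSet_cyl k y)), Set.inter_comm,
        Measure.smul_apply, smul_eq_mul]
      by_cases hxy : y 0 = x n
      · rw [cyl_inter_shift_cyl n k x y hxy]
        unfold cyl
        rw [hP.2, hP.2, hP.2, if_pos hxy]
        simp only [Nat.zero_le, if_true]
        split_ifs with h0
        · rw [Finset.prod_range_add]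
          congr 1
          · refine Finset.prod_congr rfl fun i hi => ?_
            have := Finset.mem_range.1 hi
            rw [if_pos (by omega), if_pos (by omega)]
          · refine Finset.prod_congr rfl fun i hi => ?_
            rw [if_neg (by omega : ¬ n + i + 1 ≤ n), show n + i + 1 - n = i + 1 by omega]
            rcases Nat.eq_zero_or_pos i with rfl | hpos
            · simp [hxy]
            · rw [if_neg (by omega), show n + i - n = i by omega]
        · simp
      · have h1 : cyl n x ∩ shift n ⁻¹' cyl k y = ∅ := by
          ext ω
          simp only [Set.mem_inter_iff, Set.mem_empty_iff_false, iff_false]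
          rintro ⟨h1, h2⟩
          have a := h1 n le_rfl
          have b := h2 0 (Nat.zero_le _)
          simp only [shift, add_zero] at b
          exact hxy (b.symm.trans a)
        rw [h1]
        unfold cyl
        rw [hP.2 (x n), if_neg hxy]
        simp
    · rw [Measure.map_apply (measurable_shift n) MeasurableSet.univ]
      simp
  have := congrArg (fun μ => μ E) key
  simp only [Measure.smul_apply, smul_eq_mul] at this
  rw [Measure.map_apply (measurable_shift n) hE,
    Measure.restrict_apply (measurable_shift n hE), Set.inter_comm] at this
  exact this

lemma measure_cyl_inter [MeasurableSpace V] [MeasurableSingletonClass V] [Countable V]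
    {G : SimpleGraph V} {P : V → Measure (ℕ → V)} (hP : IsSRWLaw G P) (v : V) (n : ℕ) (x : ℕ → V)
    {A : Set (ℕ → V)} (hA : ShiftInvariant A) :
    P v (cyl n x ∩ A) = P v (cyl n x) * P (x n) A := by
  rw [← measure_cyl_inter_shift hP v n x hA.1]
  congr 2
  ext ω
  exact (hA.mem_shift_iff n ω).symm

/-! ### The maximal inequality -/

/-- Maximal inequality for the harmonic function `u ↦ P u A`. -/
lemma mul_hit_le [MeasurableSpace V] [MeasurableSingletonClass V] [Countable V]
    {G : SimpleGraph V} {P : V → Measure (ℕ → V)} (hP : IsSRWLaw G P) (v : V)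
    {A : Set (ℕ → V)} (hA : ShiftInvariant A) (c : ENNReal) (S : Set V)
    (hS : ∀ u ∈ S, c ≤ P u A) :
    c * P v {ω | ∃ n, ω n ∈ S} ≤ P v A := by
  -- The finite trajectories that visit `S` at their last position and not before.
  let I := {q : Σ n : ℕ, (Fin (n + 1) → V) //
    frozenAt q.1 q.2 q.1 ∈ S ∧ ∀ i < q.1, frozenAt q.1 q.2 i ∉ S}
  let C : I → Set (ℕ → V) := fun q => cyl q.1.1 (frozenAt q.1.1 q.1.2)
  have hcover : {ω : ℕ → V | ∃ n, ω n ∈ S} ⊆ ⋃ q, C q := by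
    intro ω hω
    let n := Nat.find hω
    have hm := mem_cyl_frozenAt n ω
    refine Set.mem_iUnion.2 ⟨⟨⟨n, fun i => ω i⟩, ?_, ?_⟩, hm⟩
    · rw [← hm n le_rfl]
      exact Nat.find_spec hω
    · intro i hi
      have hi' : i < n := hi
      rw [← hm i hi'.le]
      exact Nat.find_min hω hi'
  have hdisj : Pairwise fun q r => Disjoint (C q ∩ A) (C r ∩ A) := by
    rintro ⟨⟨n, y⟩, hy1, hy2⟩ ⟨⟨k, z⟩, hz1, hz2⟩ hne
    refine Set.disjoint_left.2 ?_
    rintro ω ⟨h1, -⟩ ⟨h2, -⟩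
    apply hne
    dsimp only at hy1 hy2 hz1 hz2
    have h1' : ω ∈ cyl n (frozenAt n y) := h1
    have h2' : ω ∈ cyl k (frozenAt k z) := h2
    have hnk : n = k := by
      rcases lt_trichotomy n k with h | h | h
      · exact absurd (by rw [← h2' n h.le, h1' n le_rfl]; exact hy1) (hz2 n h)
      · exact h
      · exact absurd (by rw [← h1' k h.le, h2' k le_rfl]; exact hz1) (hy2 k h)
    subst hnk
    have : y = z := funext fun i => (frozenAt_apply h1' i).symm.trans (frozenAt_apply h2' i)
    subst this
    rfl
  calc c * P v {ω | ∃ n, ω n ∈ S}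
      ≤ c * ∑' q, P v (C q) := by
        gcongr
        exact (measure_mono hcover).trans (measure_iUnion_le _)
    _ = ∑' q, P v (C q) * c := by
        rw [ENNReal.tsum_mul_right, mul_comm]
    _ ≤ ∑' q, P v (C q ∩ A) := by
        refine ENNReal.tsum_le_tsum fun q => ?_
        rw [measure_cyl_inter hP v _ _ hA]
        gcongr
        exact hS _ q.2.1
    _ = P v (⋃ q, C q ∩ A) :=
        (measure_iUnion hdisj fun q => (measurableSet_cyl _ _).inter hA.1).symm
    _ ≤ P v A := measure_mono (Set.iUnion_subset fun q => Set.inter_subset_right)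

/-! ### Trajectories as walks -/

lemma countable_of_connected {G : SimpleGraph V} (hconn : G.Connected)
    (hlf : ∀ v, (G.neighborSet v).Finite) : Countable V := by
  obtain ⟨v⟩ := hconn.nonempty
  have hball : ∀ n : ℕ, {u | ∃ p : G.Walk u v, p.length = n}.Finite := by
    intro n
    induction n with
    | zero =>
      refine (Set.finite_singleton v).subset ?_
      rintro u ⟨p, hp⟩
      exact SimpleGraph.Walk.eq_of_length_eq_zero hp
    | succ n ih =>
      refine (ih.biUnion fun u _ => hlf u).subset ?_
      rintro u ⟨p, hp⟩
      cases p with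
      | nil => simp at hp
      | cons h q =>
        refine Set.mem_biUnion ⟨q, by simpa using hp⟩ ?_
        exact h.symm
  rw [← Set.countable_univ_iff]
  refine (Set.countable_iUnion fun n => (hball n).countable).mono ?_
  intro u _
  obtain ⟨p⟩ := hconn.preconnected u v
  exact Set.mem_iUnion.2 ⟨p.length, p, rfl⟩

/-- Almost every trajectory starts at `v` and moves along edges of `G`. -/
lemma ae_walk [MeasurableSpace V] [Countable V]
    {G : SimpleGraph V} {P : V → Measure (ℕ → V)} (hP : IsSRWLaw G P) (v : V) :
    ∀ᵐ ω ∂(P v), ω 0 = v ∧ ∀ n, G.Adj (ω n) (ω (n + 1)) := by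
  -- Each of the countably many cylinders of probability zero may be avoided.
  have h : ∀ᵐ ω ∂(P v), ∀ (n : ℕ) (y : Fin (n + 1) → V),
      P v (cyl n (frozenAt n y)) = 0 → ω ∉ cyl n (frozenAt n y) := by
    rw [ae_all_iff]; intro n
    rw [ae_all_iff]; intro y
    by_cases h0 : P v (cyl n (frozenAt n y)) = 0
    · have := measure_eq_zero_iff_ae_notMem.1 h0
      filter_upwards [this] with ω hω _ using hω
    · exact Filter.Eventually.of_forall fun ω h => absurd h h0
  filter_upwards [h] with ω hω
  constructor
  · by_contra hne
    refine hω 0 (fun i => ω i) ?_ (mem_cyl_frozenAt 0 ω)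
    unfold cyl
    rw [hP.2, if_neg]
    simpa [frozenAt] using hne
  · intro n
    by_contra hne
    have hm := mem_cyl_frozenAt (n + 1) ω
    refine hω (n + 1) (fun i => ω i) ?_ hm
    unfold cyl
    rw [hP.2]
    split_ifs
    · refine Finset.prod_eq_zero (Finset.self_mem_range_succ n) ?_
      rw [← hm n (by omega), ← hm (n + 1) le_rfl, stepProb, if_neg hne]
    · rfl

/-- The `Z` version of the theorem. -/
lemma exists_path_lt [MeasurableSpace V] [MeasurableSingletonClass V] [Countable V]
    {G : SimpleGraph V} {P : V → Measure (ℕ → V)} (hP : IsSRWLaw G P)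
    {A : Set (ℕ → V)} (hA : ShiftInvariant A) {ε κ : ℝ} (hκ : 0 < κ) (hεκ : 0 < ε / κ)
    (v : V) (W : Set V) (hW : κ ≤ (P v {ω | ∃ n, ω n ∈ W}).toReal) (hv : (P v A).toReal < ε) :
    ∃ w ∈ W, ∃ p : G.Walk v w, p.IsPath ∧ ∀ u ∈ p.support, (P u A).toReal < ε / κ := by
  have := hP.1
  by_contra hcon
  let S : Set V := {u | ε / κ ≤ (P u A).toReal}
  have hsub : P v {ω | ∃ n, ω n ∈ W} ≤ P v {ω | ∃ n, ω n ∈ S} := by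
    refine measure_mono_ae ?_
    filter_upwards [ae_walk hP v] with ω hω hhit
    obtain ⟨n, hn⟩ := hhit
    by_contra hS
    have hS' : ∀ k, (P (ω k) A).toReal < ε / κ := fun k => not_le.1 fun hk => hS ⟨k, hk⟩
    have hwalk : ∀ k, ∃ p : G.Walk v (ω k), ∀ u ∈ p.support, (P u A).toReal < ε / κ := by
      intro k
      induction k with
      | zero =>
        rw [hω.1]
        refine ⟨SimpleGraph.Walk.nil, fun u hu => ?_⟩
        rw [SimpleGraph.Walk.support_nil, List.mem_singleton] at hu
        rw [hu, ← hω.1]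
        exact hS' 0
      | succ k ih =>
        obtain ⟨p, hp⟩ := ih
        refine ⟨p.concat (hω.2 k), fun u hu => ?_⟩
        rw [SimpleGraph.Walk.support_concat, List.mem_append, List.mem_singleton] at hu
        rcases hu with hu | rfl
        · exact hp u hu
        · exact hS' _
    obtain ⟨p, hp⟩ := hwalk n
    exact hcon ⟨ω n, hn, p.bypass, p.bypass_isPath,
      fun u hu => hp u (p.support_bypass_subset_support hu)⟩
  have hmax := mul_hit_le hP v hA (ENNReal.ofReal (ε / κ)) S fun u hu =>
    ENNReal.ofReal_le_of_le_toReal hu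
  have h1 := ENNReal.toReal_mono (measure_ne_top _ _) hmax
  rw [ENNReal.toReal_mul, ENNReal.toReal_ofReal hεκ.le] at h1
  have h2 := hW.trans (ENNReal.toReal_mono (measure_ne_top _ _) hsub)
  have h3 := mul_le_mul_of_nonneg_left h2 hεκ.le
  rw [div_mul_cancel₀ _ hκ.ne'] at h3
  linarith


theorem path_in_high_probability_set
    {V : Type} [m : MeasurableSpace V] (hm : m = ⊤)
    (G : SimpleGraph V) (hconn : G.Connected)
    (hlf : ∀ v, (G.neighborSet v).Finite)
    (P : V → Measure (ℕ → V)) (hP : IsSRWLaw G P)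
    (A : Set (ℕ → V)) (hA : ShiftInvariant A)
    (ε κ : ℝ) (hε : 0 < ε) (hκ : κ ∈ Set.Ioc (0 : ℝ) 1)
    (hεκ : ε / κ ∈ Set.Ioc (0 : ℝ) (1 / 2))
    (v : V) (W : Set V)
    (hW : κ ≤ (P v {ω | ∃ n, ω n ∈ W}).toReal) :
    -- the `A_r` version
    (1 - ε < (P v A).toReal →
      ∃ w ∈ W, ∃ p : G.Walk v w, p.IsPath ∧
        ∀ u ∈ p.support, 1 - ε / κ < (P u A).toReal) ∧
    -- the `Z_r` version
    ((P v A).toReal < ε →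
      ∃ w ∈ W, ∃ p : G.Walk v w, p.IsPath ∧
        ∀ u ∈ p.support, (P u A).toReal < ε / κ) := by
  subst hm
  have := hP.1
  have : Countable V := countable_of_connected hconn hlf
  let _ : MeasurableSpace V := ⊤
  have : MeasurableSingletonClass V := ⟨fun _ => trivial⟩
  refine ⟨fun hv => ?_, fun hv => exists_path_lt hP hA hκ.1 hεκ.1 v W hW hv⟩
  have hAc : ShiftInvariant Aᶜ := ⟨hA.1.compl, by
    conv_lhs => rw [hA.2]
    rfl⟩
  have hcompl : ∀ u, (P u Aᶜ).toReal = 1 - (P u A).toReal := fun u =>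
    probReal_compl_eq_one_sub (μ := P u) hA.1
  obtain ⟨w, hw, p, hp, hlt⟩ :=
    exists_path_lt hP hAc hκ.1 hεκ.1 v W hW (by rw [hcompl]; linarith)
  refine ⟨w, hw, p, hp, fun u hu => ?_⟩
  have := hlt u hu
  rw [hcompl] at this
  linarith

end Paper
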